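/- arXiv:2104.03482 — 3 statements merged into one kernel-verified Lean document; each statement's English description precedes it below -/
import Mathlib

section
/- Let G be a finite simple connected bipartite {C₃,C₄}-free graph with at least two vertices. Then Lξᶜ(R(G)) = 2Lξᶜ(G) + 2ξᶜ(L(G)) + 4|E(L(G))|. -/
/-!
All distances of `R(G)` and `L(G)` are expressed through distances in `G`. Write `d(v,e)` for the
distance in `G` from a vertex `v` to the nearer endpoint of an edge `e`, and `d(e,f)` for the
distance between nearest endpoints of two edges. Then for `e ≠ f`

* `d_R(v,w) = d_G(v,w)`, `d_R(v,e) = d(v,e) + 1`, `d_R(e,f) = d(e,f) + 2`,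
* `d_L(e,f) = d(e,f) + 1`.

Upper bounds come from explicit walks, lower bounds from the fact that the right-hand sides change
by at most one along every edge (`le_dist_of_lipschitz`).

In a bipartite graph the endpoints of an edge are never equidistant from a vertex, so
`e(v|R) = e(v|G)`. An edge at distance `1` from `v` has exactly one endpoint at distance `2`, and
in the absence of 4-cycles each vertex at distance `2` is the endpoint of exactly one such edge, so
`d₂(v|R) = 2 d₂(v|G)`. In the same way, sending an edge adjacent to `e` to its endpoint outside
`e` is a bijection onto the vertices at distance `1` from `e`, because bipartite graphs have no
triangles, so `d₂(e|R) = 2 d₁(e|L)`. Finally `e(e|R) = e(e|L) + 1` as soon as `e` has a neighbour in `L(G)`, and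
the handshake lemma in `L(G)` evaluates the remaining sum.
-/

/-!
Definitions for the leap eccentric connectivity index of graph operations with
subdivided edges (Song–Tang).
-/

open SimpleGraph Finset
open scoped Classical

noncomputable section

instance edgeSetFintypeOfFintype {V : Type*} [Fintype V] (G : SimpleGraph V) :
    Fintype G.edgeSet :=
  Set.Finite.fintype (Set.toFinite _)

/-- Eccentricity `e(v|X)` of a vertex: the maximum distance from `v` to a vertex of `X`. -/
def ecc {V : Type*} [Fintype V] (X : SimpleGraph V) (v : V) : ℕ :=
  Finset.univ.sup (fun u => X.dist v u)

/-- `d₁(v|X)`: the degree of `v`. -/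
def deg1 {V : Type*} [Fintype V] (X : SimpleGraph V) (v : V) : ℕ :=
  (Finset.univ.filter (fun u => X.Adj v u)).card

/-- `d₂(v|X)`: the second degree of `v`, the number of vertices at distance exactly 2. -/
def deg2 {V : Type*} [Fintype V] (X : SimpleGraph V) (v : V) : ℕ :=
  (Finset.univ.filter (fun u => X.dist v u = 2)).card

/-- The leap eccentric connectivity index `Lξᶜ(X) = Σ_v d₂(v|X)·e(v|X)`. -/
def leapECI {V : Type*} [Fintype V] (X : SimpleGraph V) : ℕ :=
  ∑ v, deg2 X v * ecc X v

/-- The eccentric connectivity index `ξᶜ(X) = Σ_v d₁(v|X)·e(v|X)`. -/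
def eci {V : Type*} [Fintype V] (X : SimpleGraph V) : ℕ :=
  ∑ v, deg1 X v * ecc X v

/-- The first Zagreb index `M₁(X) = Σ_v d₁(v|X)²`. -/
def zagrebM1 {V : Type*} [Fintype V] (X : SimpleGraph V) : ℕ :=
  ∑ v, (deg1 X v) ^ 2

/-- The total eccentricity `θ(X) = Σ_v e(v|X)`. -/
def totalEcc {V : Type*} [Fintype V] (X : SimpleGraph V) : ℕ :=
  ∑ v, ecc X v

/-- The number of edges `|E(X)|`. -/
def numEdges {V : Type*} (X : SimpleGraph V) : ℕ := X.edgeSet.ncard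

/-- The line graph `L(G)`, with vertex set `E(G)`: two edges of `G` are adjacent in
`L(G)` iff they are distinct and share an endpoint. -/
def lineG {V : Type*} (G : SimpleGraph V) : SimpleGraph G.edgeSet :=
  SimpleGraph.fromRel (fun e f => ∃ v, v ∈ (e : Sym2 V) ∧ v ∈ (f : Sym2 V))

/-- The subdivision graph `S(G)`, with vertex set `V(G) ⊕ E(G)`:
`v ∈ V(G)` is adjacent to `e ∈ E(G)` iff `v` is an endpoint of `e`; no other edges. -/
def subdivG {V : Type*} (G : SimpleGraph V) : SimpleGraph (V ⊕ G.edgeSet) :=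
  SimpleGraph.fromRel (fun a b => match a, b with
    | Sum.inl v, Sum.inr e => v ∈ (e : Sym2 V)
    | _, _ => False)

/-- The graph `Q(G)`, with vertex set `V(G) ⊕ E(G)`: `v ∈ V(G)` is adjacent to
`e ∈ E(G)` iff `v` is an endpoint of `e`, and distinct `e, e' ∈ E(G)` are adjacent
iff the corresponding edges share an endpoint in `G`. -/
def qGraph {V : Type*} (G : SimpleGraph V) : SimpleGraph (V ⊕ G.edgeSet) :=
  SimpleGraph.fromRel (fun a b => match a, b with
    | Sum.inl v, Sum.inr e => v ∈ (e : Sym2 V)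
    | Sum.inr e, Sum.inr f => ∃ v, v ∈ (e : Sym2 V) ∧ v ∈ (f : Sym2 V)
    | _, _ => False)

/-- The graph `R(G)`, with vertex set `V(G) ⊕ E(G)`: `v, v' ∈ V(G)` are adjacent iff
they are adjacent in `G`, and `v ∈ V(G)` is adjacent to `e ∈ E(G)` iff `v` is an
endpoint of `e`. -/
def rGraph {V : Type*} (G : SimpleGraph V) : SimpleGraph (V ⊕ G.edgeSet) :=
  SimpleGraph.fromRel (fun a b => match a, b with
    | Sum.inl v, Sum.inl w => G.Adj v w
    | Sum.inl v, Sum.inr e => v ∈ (e : Sym2 V)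
    | _, _ => False)

/-- The total graph `T(G)`, with vertex set `V(G) ⊕ E(G)`: adjacency holds iff the
corresponding elements of `G` are adjacent or incident. -/
def tGraph {V : Type*} (G : SimpleGraph V) : SimpleGraph (V ⊕ G.edgeSet) :=
  SimpleGraph.fromRel (fun a b => match a, b with
    | Sum.inl v, Sum.inl w => G.Adj v w
    | Sum.inl v, Sum.inr e => v ∈ (e : Sym2 V)
    | Sum.inr e, Sum.inr f => ∃ v, v ∈ (e : Sym2 V) ∧ v ∈ (f : Sym2 V)
    | _, _ => False)

/-- `G` is `F`-free: no induced subgraph of `G` is isomorphic to `F`. -/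
def fFree {W V : Type*} (F : SimpleGraph W) (G : SimpleGraph V) : Prop :=
  ∀ s : Set V, IsEmpty (F ≃g G.induce s)

/-- The subdivision vertex join `G ∨̇ H`: the disjoint union of `S(G)` and `H`,
joining every original vertex of `G` to every vertex of `H`. -/
def svJoin {V W : Type*} (G : SimpleGraph V) (H : SimpleGraph W) :
    SimpleGraph ((V ⊕ G.edgeSet) ⊕ W) :=
  SimpleGraph.fromRel (fun a b => match a, b with
    | Sum.inl x, Sum.inl y => (subdivG G).Adj x y
    | Sum.inl (Sum.inl _), Sum.inr _ => True
    | Sum.inr w, Sum.inr w' => H.Adj w w'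
    | _, _ => False)

/-- The subdivision edge join `G ⊻ H`: the disjoint union of `S(G)` and `H`,
joining every subdivision vertex to every vertex of `H`. -/
def seJoin {V W : Type*} (G : SimpleGraph V) (H : SimpleGraph W) :
    SimpleGraph ((V ⊕ G.edgeSet) ⊕ W) :=
  SimpleGraph.fromRel (fun a b => match a, b with
    | Sum.inl x, Sum.inl y => (subdivG G).Adj x y
    | Sum.inl (Sum.inr _), Sum.inr _ => True
    | Sum.inr w, Sum.inr w' => H.Adj w w'
    | _, _ => False)

/-- The subdivision vertex edge join `G^S △ (H₁^V ∨ H₂^S)`: the disjoint union of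
`S(G)`, `H₁` and `H₂`, joining every original vertex of `G` to every vertex of `H₁`
and every subdivision vertex to every vertex of `H₂`. -/
def sveJoin {V W₁ W₂ : Type*} (G : SimpleGraph V) (H₁ : SimpleGraph W₁)
    (H₂ : SimpleGraph W₂) : SimpleGraph ((V ⊕ G.edgeSet) ⊕ (W₁ ⊕ W₂)) :=
  SimpleGraph.fromRel (fun a b => match a, b with
    | Sum.inl x, Sum.inl y => (subdivG G).Adj x y
    | Sum.inl (Sum.inl _), Sum.inr (Sum.inl _) => True
    | Sum.inl (Sum.inr _), Sum.inr (Sum.inr _) => True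
    | Sum.inr (Sum.inl w), Sum.inr (Sum.inl w') => H₁.Adj w w'
    | Sum.inr (Sum.inr w), Sum.inr (Sum.inr w') => H₂.Adj w w'
    | _, _ => False)

/-- The double corona of a base graph `B` on `A ⊕ E'` with the graphs `H₁, H₂`:
one copy of `H₁` for each `A`-vertex, joined to it, and one copy of `H₂` for each
`E'`-vertex, joined to it. -/
def doubleCorona {A E' W₁ W₂ : Type*} (B : SimpleGraph (A ⊕ E')) (H₁ : SimpleGraph W₁)
    (H₂ : SimpleGraph W₂) : SimpleGraph ((A ⊕ E') ⊕ (A × W₁ ⊕ E' × W₂)) :=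
  SimpleGraph.fromRel (fun a b => match a, b with
    | Sum.inl x, Sum.inl y => B.Adj x y
    | Sum.inl (Sum.inl v), Sum.inr (Sum.inl p) => v = p.1
    | Sum.inl (Sum.inr e), Sum.inr (Sum.inr p) => e = p.1
    | Sum.inr (Sum.inl p), Sum.inr (Sum.inl q) => p.1 = q.1 ∧ H₁.Adj p.2 q.2
    | Sum.inr (Sum.inr p), Sum.inr (Sum.inr q) => p.1 = q.1 ∧ H₂.Adj p.2 q.2
    | _, _ => False)

/-! ### Distances between vertices and edges of `G` -/

/-- A function vanishing at `a` that grows by at most one along edges is bounded by the distance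
from `a`. -/
lemma le_dist_of_lipschitz {W : Type*} (X : SimpleGraph W) (φ : W → ℕ)
    (h : ∀ a b, X.Adj a b → φ b ≤ φ a + 1) {a b : W} (h0 : φ a = 0) (hr : X.Reachable a b) :
    φ b ≤ X.dist a b := by
  have key : ∀ {a b : W} (p : X.Walk a b), φ b ≤ φ a + p.length := by
    intro a b p
    induction p with
    | nil => simp
    | cons hadj p ih =>
      have := h _ _ hadj
      simp only [Walk.length_cons]
      omega
  obtain ⟨p, hp⟩ := hr.exists_walk_length_eq_dist
  have := key p
  omega

/-- The distance in `G` from the vertex `v` to the nearer of the two elements of `e`. -/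
def vertexEdgeDist {V : Type*} (G : SimpleGraph V) (v : V) (e : Sym2 V) : ℕ :=
  Sym2.lift ⟨fun x y => min (G.dist v x) (G.dist v y), fun _ _ => min_comm _ _⟩ e

/-- The least distance in `G` between an element of `e` and an element of `f`. -/
def edgeEdgeDist {V : Type*} (G : SimpleGraph V) (e f : Sym2 V) : ℕ :=
  Sym2.lift ⟨fun x y => min (vertexEdgeDist G x e) (vertexEdgeDist G y e),
    fun _ _ => min_comm _ _⟩ f

section
variable {V : Type*} {G : SimpleGraph V}

lemma vertexEdgeDist_le {v x : V} {e : Sym2 V} (hx : x ∈ e) :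
    vertexEdgeDist G v e ≤ G.dist v x := by
  induction e with
  | _ a b =>
    rcases Sym2.mem_iff.1 hx with rfl | rfl <;> simp [vertexEdgeDist]

lemma exists_vertexEdgeDist (v : V) (e : Sym2 V) :
    ∃ x ∈ e, vertexEdgeDist G v e = G.dist v x := by
  induction e with
  | _ a b =>
    rcases min_choice (G.dist v a) (G.dist v b) with h | h
    · exact ⟨a, by simp, by simpa [vertexEdgeDist] using h⟩
    · exact ⟨b, by simp, by simpa [vertexEdgeDist] using h⟩

lemma edgeEdgeDist_le {x : V} {e f : Sym2 V} (hx : x ∈ f) :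
    edgeEdgeDist G e f ≤ vertexEdgeDist G x e := by
  induction f with
  | _ a b =>
    rcases Sym2.mem_iff.1 hx with rfl | rfl <;> simp [edgeEdgeDist]

lemma exists_edgeEdgeDist (e f : Sym2 V) :
    ∃ x ∈ f, edgeEdgeDist G e f = vertexEdgeDist G x e := by
  induction f with
  | _ a b =>
    rcases min_choice (vertexEdgeDist G a e) (vertexEdgeDist G b e) with h | h
    · exact ⟨a, by simp, by simpa [edgeEdgeDist] using h⟩
    · exact ⟨b, by simp, by simpa [edgeEdgeDist] using h⟩

lemma vertexEdgeDist_eq_zero (hc : G.Connected) {v : V} {e : Sym2 V} :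
    vertexEdgeDist G v e = 0 ↔ v ∈ e := by
  constructor
  · intro h
    obtain ⟨x, hx, hd⟩ := exists_vertexEdgeDist (G := G) v e
    rw [h] at hd
    rwa [hc.dist_eq_zero_iff.1 hd.symm]
  · intro h
    have := vertexEdgeDist_le (G := G) (v := v) h
    simpa using this

/-- Adjacent vertices differ by at most one in their distance to `e`. -/
lemma vertexEdgeDist_lip (hc : G.Connected) {v w : V} (h : G.Adj v w) (e : Sym2 V) :
    vertexEdgeDist G w e ≤ vertexEdgeDist G v e + 1 := by
  obtain ⟨x, hx, hd⟩ := exists_vertexEdgeDist (G := G) v e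
  have h1 := vertexEdgeDist_le (G := G) (v := w) hx
  have h2 := hc.dist_triangle (u := w) (v := v) (w := x)
  have h3 : G.dist w v = 1 := dist_eq_one_iff_adj.2 h.symm
  omega

lemma adj_of_mem {e : G.edgeSet} {x y : V} (hx : x ∈ (e : Sym2 V)) (hy : y ∈ (e : Sym2 V))
    (h : x ≠ y) : G.Adj x y := by
  obtain ⟨e, he⟩ := e
  have : e = s(x, y) := (Sym2.mem_and_mem_iff h).1 ⟨hx, hy⟩
  subst this
  exact he

/-- The two endpoints of `f` differ by at most one in their distance to `e`, so either endpoint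
attains the minimum up to one. -/
lemma vertexEdgeDist_le_edgeEdgeDist (hc : G.Connected) {v : V} (e : Sym2 V) {f : G.edgeSet}
    (hv : v ∈ (f : Sym2 V)) : vertexEdgeDist G v e ≤ edgeEdgeDist G e f + 1 := by
  obtain ⟨x, hx, hd⟩ := exists_edgeEdgeDist (G := G) e f
  by_cases h : x = v
  · subst h; omega
  · have := vertexEdgeDist_lip hc (adj_of_mem hx hv h) e
    omega

lemma dist_le_vertexEdgeDist_add_one (hc : G.Connected) {v w : V} {f : G.edgeSet}
    (hw : w ∈ (f : Sym2 V)) : G.dist v w ≤ vertexEdgeDist G v f + 1 := by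
  obtain ⟨x, hx, hd⟩ := exists_vertexEdgeDist (G := G) v f
  by_cases h : x = w
  · subst h; omega
  · have := hc.dist_triangle (u := v) (v := x) (w := w)
    have h3 : G.dist x w = 1 := dist_eq_one_iff_adj.2 (adj_of_mem hx hw h)
    omega

/-! ### Distances in `R(G)` -/

@[simp] lemma rGraph_adj_inl_inl {v w : V} :
    (rGraph G).Adj (Sum.inl v) (Sum.inl w) ↔ G.Adj v w := by
  simp only [rGraph, fromRel_adj, ne_eq, Sum.inl.injEq]
  exact ⟨fun h => h.2.elim id fun h => h.symm, fun h => ⟨h.ne, Or.inl h⟩⟩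

@[simp] lemma rGraph_adj_inl_inr {v : V} {e : G.edgeSet} :
    (rGraph G).Adj (Sum.inl v) (Sum.inr e) ↔ v ∈ (e : Sym2 V) := by
  simp [rGraph]

@[simp] lemma rGraph_adj_inr_inl {v : V} {e : G.edgeSet} :
    (rGraph G).Adj (Sum.inr e) (Sum.inl v) ↔ v ∈ (e : Sym2 V) := by
  simp [rGraph]

@[simp] lemma rGraph_adj_inr_inr {e f : G.edgeSet} :
    ¬ (rGraph G).Adj (Sum.inr e) (Sum.inr f) := by
  simp [rGraph]

lemma lineG_adj {e f : G.edgeSet} :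
    (lineG G).Adj e f ↔ e ≠ f ∧ ∃ v, v ∈ (e : Sym2 V) ∧ v ∈ (f : Sym2 V) := by
  simp only [lineG, fromRel_adj]
  constructor
  · rintro ⟨h, h' | ⟨v, h1, h2⟩⟩
    exacts [⟨h, h'⟩, ⟨h, v, h2, h1⟩]
  · rintro ⟨h, h'⟩
    exact ⟨h, Or.inl h'⟩

lemma exists_mem_edge (e : G.edgeSet) : ∃ x, x ∈ (e : Sym2 V) :=
  ⟨_, Sym2.out_fst_mem _⟩

/-- A walk of `G` is also a walk of `R(G)`. -/
lemma rGraph_walk {v w : V} (p : G.Walk v w) :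
    ∃ q : (rGraph G).Walk (Sum.inl v) (Sum.inl w), q.length = p.length :=
  ⟨p.map ⟨Sum.inl, fun h => rGraph_adj_inl_inl.2 h⟩, by simp⟩

lemma rGraph_connected (hc : G.Connected) : (rGraph G).Connected := by
  have : Nonempty V := hc.nonempty
  obtain ⟨v⟩ := this
  have h1 : ∀ w, (rGraph G).Reachable (Sum.inl v) (Sum.inl w) := by
    intro w
    obtain ⟨p⟩ := hc.preconnected v w
    exact ⟨(rGraph_walk p).choose⟩
  have h2 : ∀ a, (rGraph G).Reachable (Sum.inl v) a := by
    rintro (w | e)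
    · exact h1 w
    · obtain ⟨x, hx⟩ := exists_mem_edge e
      exact (h1 x).trans (rGraph_adj_inl_inr.2 hx).reachable
  exact (connected_iff _).2 ⟨fun a b => (h2 a).symm.trans (h2 b), ⟨Sum.inl v⟩⟩

/-- The claimed distance in `R(G)` from the vertex `v`. -/
def distFromVertex (G : SimpleGraph V) (v : V) : V ⊕ G.edgeSet → ℕ
  | Sum.inl w => G.dist v w
  | Sum.inr e => vertexEdgeDist G v e + 1

/-- The claimed distance in `R(G)` from the subdividing vertex `e`. -/
def distFromEdge (G : SimpleGraph V) (e : G.edgeSet) : V ⊕ G.edgeSet → ℕ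
  | Sum.inl w => vertexEdgeDist G w e + 1
  | Sum.inr f => if e = f then 0 else edgeEdgeDist G e f + 2

lemma rGraph_dist_inl_inl_le (hc : G.Connected) (v w : V) :
    (rGraph G).dist (Sum.inl v) (Sum.inl w) ≤ G.dist v w := by
  obtain ⟨p, hp⟩ := hc.exists_walk_length_eq_dist v w
  obtain ⟨q, hq⟩ := rGraph_walk p
  have := dist_le q
  omega

lemma rGraph_dist_from_vertex (hc : G.Connected) (v : V) (a : V ⊕ G.edgeSet) :
    (rGraph G).dist (Sum.inl v) a = distFromVertex G v a := by
  apply le_antisymm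
  · rcases a with w | e
    · exact rGraph_dist_inl_inl_le hc v w
    · obtain ⟨x, hx, hd⟩ := exists_vertexEdgeDist (G := G) v e
      have h1 := (rGraph_connected hc).dist_triangle (u := Sum.inl v) (v := Sum.inl x)
        (w := Sum.inr e)
      have h2 := rGraph_dist_inl_inl_le hc v x
      have h3 : (rGraph G).dist (Sum.inl x) (Sum.inr e) = 1 :=
        dist_eq_one_iff_adj.2 (rGraph_adj_inl_inr.2 hx)
      simp only [distFromVertex]
      omega
  · refine le_dist_of_lipschitz _ (distFromVertex G v) ?_ (by simp [distFromVertex])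
      ((rGraph_connected hc).preconnected _ _)
    rintro (x | e) (y | f) h
    · rw [rGraph_adj_inl_inl] at h
      have := hc.dist_triangle (u := v) (v := x) (w := y)
      have h3 : G.dist x y = 1 := dist_eq_one_iff_adj.2 h
      simp only [distFromVertex]
      omega
    · rw [rGraph_adj_inl_inr] at h
      have := vertexEdgeDist_le (G := G) (v := v) h
      simp only [distFromVertex]
      omega
    · rw [rGraph_adj_inr_inl] at h
      have := dist_le_vertexEdgeDist_add_one (v := v) hc h
      simp only [distFromVertex]
      omega
    · exact absurd h rGraph_adj_inr_inr

lemma rGraph_dist_from_edge (hc : G.Connected) (e : G.edgeSet) (a : V ⊕ G.edgeSet) :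
    (rGraph G).dist (Sum.inr e) a = distFromEdge G e a := by
  rcases a with w | f
  · rw [SimpleGraph.dist_comm, rGraph_dist_from_vertex hc]
    rfl
  apply le_antisymm
  · simp only [distFromEdge]
    split_ifs with hef
    · subst hef; simp
    · obtain ⟨x, hx, hd⟩ := exists_edgeEdgeDist (G := G) e f
      have h1 := (rGraph_connected hc).dist_triangle (u := Sum.inr e) (v := Sum.inl x)
        (w := Sum.inr f)
      have h2 : (rGraph G).dist (Sum.inr e) (Sum.inl x) = vertexEdgeDist G x e + 1 := by
        rw [SimpleGraph.dist_comm, rGraph_dist_from_vertex hc]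
        rfl
      have h3 : (rGraph G).dist (Sum.inl x) (Sum.inr f) = 1 :=
        dist_eq_one_iff_adj.2 (rGraph_adj_inl_inr.2 hx)
      omega
  · refine le_dist_of_lipschitz _ (distFromEdge G e) ?_ (by simp [distFromEdge])
      ((rGraph_connected hc).preconnected _ _)
    rintro (x | f) (y | g) h
    · have := vertexEdgeDist_lip hc (rGraph_adj_inl_inl.1 h) e
      simp only [distFromEdge]
      omega
    · rw [rGraph_adj_inl_inr] at h
      have := edgeEdgeDist_le (G := G) (e := e) h
      simp only [distFromEdge]
      split_ifs <;> omega
    · rw [rGraph_adj_inr_inl] at h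
      simp only [distFromEdge]
      split_ifs with hef
      · subst hef
        rw [(vertexEdgeDist_eq_zero hc).2 h]
      · have := vertexEdgeDist_le_edgeEdgeDist hc e h
        omega
    · exact absurd h rGraph_adj_inr_inr

/-! ### Distances in `L(G)` -/

/-- A walk of `G` between endpoints of `e` and `f` yields a walk of `L(G)` from `e` to `f` that
passes through the edges of the given walk. -/
lemma lineG_walk {x y : V} (p : G.Walk x y) : ∀ (e f : G.edgeSet), x ∈ (e : Sym2 V) →
    y ∈ (f : Sym2 V) → ∃ q : (lineG G).Walk e f, q.length ≤ p.length + 1 := by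
  induction p with
  | nil =>
    intro e f he hf
    by_cases h : e = f
    · subst h; exact ⟨Walk.nil, by simp⟩
    · exact ⟨Walk.cons (lineG_adj.2 ⟨h, _, he, hf⟩) Walk.nil, by simp⟩
  | @cons u v w hadj p ih =>
    intro e f he hf
    obtain ⟨q, hq⟩ := ih ⟨s(u, v), hadj⟩ f (by simp) hf
    by_cases h : e = ⟨s(u, v), hadj⟩
    · subst h
      exact ⟨q, by simp; omega⟩
    · exact ⟨Walk.cons (lineG_adj.2 ⟨h, u, he, by simp⟩) q, by simpa using hq⟩

lemma lineG_dist (hc : G.Connected) (e f : G.edgeSet) :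
    (lineG G).dist e f = if e = f then 0 else edgeEdgeDist G e f + 1 := by
  obtain ⟨y, hy, hd⟩ := exists_edgeEdgeDist (G := G) e f
  obtain ⟨x, hx, hd'⟩ := exists_vertexEdgeDist (G := G) y e
  obtain ⟨p, hp⟩ := hc.exists_walk_length_eq_dist x y
  obtain ⟨q, hq⟩ := lineG_walk p e f hx hy
  apply le_antisymm
  · split_ifs with hef
    · subst hef; simp
    · have := dist_le q
      rw [SimpleGraph.dist_comm] at hd'
      omega
  · refine le_dist_of_lipschitz (lineG G)
      (fun g => if e = g then 0 else edgeEdgeDist G e g + 1) ?_ (by simp) ⟨q⟩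
    intro g k h
    obtain ⟨-, v, hg, hk⟩ := lineG_adj.1 h
    have h1 := edgeEdgeDist_le (G := G) (e := e) hk
    have h2 := vertexEdgeDist_le_edgeEdgeDist hc e hg
    have h3 : e = g → vertexEdgeDist G v e = 0 := by
      rintro rfl
      exact (vertexEdgeDist_eq_zero hc).2 hg
    split_ifs with ha hb hb <;> first | omega | (have := h3 hb; omega)

/-! ### Consequences of bipartiteness and 4-cycle-freeness -/

/-- In a connected bipartite graph the endpoints of an edge are not equidistant from any vertex. -/
lemma dist_ne_of_adj (hc : G.Connected) (hbip : G.Colorable 2) (v : V) {x y : V}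
    (h : G.Adj x y) : G.dist v x ≠ G.dist v y := by
  intro hd
  have c : G.Coloring Bool := G.recolorOfEquiv finTwoEquiv hbip.some
  obtain ⟨p, hp⟩ := hc.exists_walk_length_eq_dist v x
  obtain ⟨q, hq⟩ := hc.exists_walk_length_eq_dist v y
  have h1 := c.even_length_iff_congr p
  have h2 := c.even_length_iff_congr q
  rw [hp, hd, ← hq, h2] at h1
  have h3 := c.valid h
  revert h1 h3
  cases c v <;> cases c x <;> cases c y <;> simp

/-- Two vertices at distance `2` have a unique common neighbour: a second one would close up an
induced 4-cycle. -/
lemma common_neighbor_unique (hc : G.Connected) (hbip : G.Colorable 2)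
    (hC4 : fFree (SimpleGraph.cycleGraph 4) G) {v w a b : V} (hvw : G.dist v w = 2)
    (hva : G.Adj v a) (haw : G.Adj a w) (hvb : G.Adj v b) (hbw : G.Adj b w) : a = b := by
  by_contra hab
  have nvw : ¬ G.Adj v w := fun h => by
    have := dist_eq_one_iff_adj.2 h
    omega
  have hne : v ≠ w := by
    rintro rfl
    simp at hvw
  have nab : ¬ G.Adj a b := fun h =>
    dist_ne_of_adj hc hbip v h
      ((dist_eq_one_iff_adj.2 hva).trans (dist_eq_one_iff_adj.2 hvb).symm)
  have nba : ¬ G.Adj b a := fun h => nab h.symm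
  have nwv : ¬ G.Adj w v := fun h => nvw h.symm
  let f : Fin 4 → V := ![v, a, w, b]
  have hf : Function.Injective f := by
    intro i j
    have := hva.ne; have := haw.ne; have := hvb.ne; have := hbw.ne
    fin_cases i <;> fin_cases j <;> simp [f] <;> grind
  refine (hC4 (Set.range f)).false ⟨Equiv.ofInjective f hf, ?_⟩
  intro i j
  simp only [comap_adj, Function.Embedding.subtype_apply, Equiv.ofInjective_apply]
  fin_cases i <;> fin_cases j <;>
    simp [f, cycleGraph_adj, hva, haw, hvb, hbw, hva.symm, haw.symm, hvb.symm, hbw.symm,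
      nvw, nab, nba, nwv] <;> decide

lemma exists_other (e : G.edgeSet) {x : V} (hx : x ∈ (e : Sym2 V)) :
    ∃ y, (e : Sym2 V) = s(x, y) ∧ G.Adj x y := by
  obtain ⟨y, hy⟩ := Sym2.mem_iff_exists.1 hx
  refine ⟨y, hy, ?_⟩
  have := e.2
  rwa [hy] at this

section
variable [Fintype V]

/-! ### Second degrees in `R(G)` -/

/-- If `r` matches every element of `s` with exactly one element of `t` and conversely, the two
sets are equinumerous. -/
lemma card_eq_of_matching {α β : Type*} {s : Finset α} {t : Finset β} (r : α → β → Prop)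
    (h1 : ∀ a ∈ s, ∃! b, b ∈ t ∧ r a b) (h2 : ∀ b ∈ t, ∃! a, a ∈ s ∧ r a b) :
    s.card = t.card := by
  choose i hi hi' using h1
  refine Finset.card_bij i (fun a ha => (hi a ha).1) ?_ ?_
  · intro a ha a' ha' h
    refine (h2 _ (hi a ha).1).unique ⟨ha, (hi a ha).2⟩ ⟨ha', ?_⟩
    rw [h]
    exact (hi a' ha').2
  · intro b hb
    obtain ⟨a, ⟨ha, hr⟩, -⟩ := h2 b hb
    exact ⟨a, ha, (hi' a ha b ⟨hb, hr⟩).symm⟩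

lemma deg2_rGraph_split (a : V ⊕ G.edgeSet) : deg2 (rGraph G) a =
    (univ.filter fun w => (rGraph G).dist a (Sum.inl w) = 2).card +
    (univ.filter fun e => (rGraph G).dist a (Sum.inr e) = 2).card := by
  simp only [deg2, Finset.card_filter, Fintype.sum_sum_type]

lemma deg2_rGraph_inl (hc : G.Connected) (hbip : G.Colorable 2)
    (hC4 : fFree (SimpleGraph.cycleGraph 4) G) (v : V) :
    deg2 (rGraph G) (Sum.inl v) = 2 * deg2 G v := by
  rw [deg2_rGraph_split, two_mul]
  simp only [rGraph_dist_from_vertex hc, distFromVertex]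
  congr 1
  symm
  refine card_eq_of_matching (fun w (e : G.edgeSet) => w ∈ (e : Sym2 V)) ?_ ?_
  · intro w hw
    simp only [mem_filter, mem_univ, true_and] at hw ⊢
    -- An edge at distance `1` from `v` through `w` joins `w` to a common neighbour of `v` and `w`.
    have key : ∀ e : G.edgeSet, vertexEdgeDist G v e + 1 = 2 → w ∈ (e : Sym2 V) →
        ∃ x, G.Adj v x ∧ G.Adj x w ∧ (e : Sym2 V) = s(w, x) := by
      intro e he hwe
      obtain ⟨x, hx, hd⟩ := exists_vertexEdgeDist (G := G) v e
      have hvx : G.Adj v x := dist_eq_one_iff_adj.1 (by omega)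
      have hxw : w ≠ x := by rintro rfl; omega
      exact ⟨x, hvx, adj_of_mem hx hwe hxw.symm, (Sym2.mem_and_mem_iff hxw).1 ⟨hwe, hx⟩⟩
    obtain ⟨p, hp⟩ := hc.exists_walk_length_eq_dist v w
    rw [hw] at hp
    obtain ⟨x, hvx, hxw⟩ : ∃ x, G.Adj v x ∧ G.Adj x w := by
      cases p with
      | nil => simp at hp
      | cons h p =>
        cases p with
        | nil => simp at hp
        | cons h' p =>
          cases p with
          | nil => exact ⟨_, h, h'⟩
          | cons _ _ => simp at hp
    refine ⟨⟨s(w, x), hxw.symm⟩, ⟨?_, by simp⟩, ?_⟩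
    · simp [vertexEdgeDist, hw, dist_eq_one_iff_adj.2 hvx]
    · rintro e ⟨he, hwe⟩
      obtain ⟨y, hvy, hyw, hey⟩ := key e he hwe
      have := common_neighbor_unique hc hbip hC4 hw hvx hxw hvy hyw
      subst this
      exact Subtype.ext hey
  · intro e he
    simp only [mem_filter, mem_univ, true_and] at he ⊢
    obtain ⟨x, hx, hd⟩ := exists_vertexEdgeDist (G := G) v e
    obtain ⟨y, hy, hxy⟩ := exists_other e hx
    have h1 := dist_ne_of_adj hc hbip v hxy
    have hye : y ∈ (e : Sym2 V) := by simp [hy]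
    have h2 := dist_le_vertexEdgeDist_add_one (v := v) hc hye
    have h3 := vertexEdgeDist_le (G := G) (v := v) hye
    refine ⟨y, ⟨by omega, hye⟩, ?_⟩
    rintro z ⟨hz, hze⟩
    rw [hy, Sym2.mem_iff] at hze
    rcases hze with rfl | rfl
    · omega
    · rfl

lemma deg2_rGraph_inr (hc : G.Connected) (hbip : G.Colorable 2) (e : G.edgeSet) :
    deg2 (rGraph G) (Sum.inr e) = 2 * deg1 (lineG G) e := by
  rw [deg2_rGraph_split, two_mul]
  simp only [rGraph_dist_from_edge hc, distFromEdge]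
  congr 1
  · refine card_eq_of_matching (fun w (f : G.edgeSet) => w ∈ (f : Sym2 V)) ?_ ?_
    · intro w hw
      simp only [mem_filter, mem_univ, true_and] at hw ⊢
      have hwe : w ∉ (e : Sym2 V) := fun h => by
        have := (vertexEdgeDist_eq_zero hc).2 h
        omega
      obtain ⟨x, hx, hd⟩ := exists_vertexEdgeDist (G := G) w e
      have hwx : G.Adj w x := dist_eq_one_iff_adj.1 (by omega)
      refine ⟨⟨s(w, x), hwx⟩, ⟨lineG_adj.2 ⟨?_, x, hx, by simp⟩, by simp⟩, ?_⟩
      · rintro rfl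
        simp at hwe
      · rintro f ⟨hf, hwf⟩
        obtain ⟨-, y, hye, hyf⟩ := lineG_adj.1 hf
        have hwy : w ≠ y := by rintro rfl; exact hwe hye
        have hf' := (Sym2.mem_and_mem_iff hwy).1 ⟨hwf, hyf⟩
        -- Distinct neighbours `x`, `y` of `w` on `e` would be equidistant from `w`.
        have hxy : x = y := by
          by_contra hxy
          exact dist_ne_of_adj hc hbip w (adj_of_mem hx hye hxy)
            ((dist_eq_one_iff_adj.2 hwx).trans
              (dist_eq_one_iff_adj.2 (adj_of_mem hwf hyf hwy)).symm)
        subst hxy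
        exact Subtype.ext hf'
    · intro f hf
      simp only [mem_filter, mem_univ, true_and] at hf ⊢
      obtain ⟨hef, x, hxe, hxf⟩ := lineG_adj.1 hf
      obtain ⟨y, hy, hxy⟩ := exists_other f hxf
      have hye : y ∉ (e : Sym2 V) := fun h =>
        hef (Subtype.ext (((Sym2.mem_and_mem_iff hxy.ne).1 ⟨hxe, h⟩).trans hy.symm))
      have h1 : vertexEdgeDist G y e ≠ 0 := fun h => hye ((vertexEdgeDist_eq_zero hc).1 h)
      have h2 := vertexEdgeDist_le (G := G) (v := y) hxe
      have h3 : G.dist y x = 1 := dist_eq_one_iff_adj.2 hxy.symm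
      refine ⟨y, ⟨by omega, by simp [hy]⟩, ?_⟩
      rintro z ⟨hz, hzf⟩
      rw [hy, Sym2.mem_iff] at hzf
      rcases hzf with rfl | rfl
      · have := (vertexEdgeDist_eq_zero hc).2 hxe
        omega
      · rfl
  · unfold deg1
    congr 1
    ext f
    simp only [mem_filter, mem_univ, true_and]
    rw [← dist_eq_one_iff_adj, lineG_dist hc]
    split_ifs <;> simp

/-! ### Eccentricities in `R(G)` -/

lemma dist_le_ecc {W : Type*} [Fintype W] (X : SimpleGraph W) (v w : W) :
    X.dist v w ≤ ecc X v :=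
  Finset.le_sup (f := fun u => X.dist v u) (mem_univ w)

lemma ecc_rGraph_inl (hc : G.Connected) (hbip : G.Colorable 2) (v : V) :
    ecc (rGraph G) (Sum.inl v) = ecc G v := by
  apply le_antisymm
  · refine Finset.sup_le ?_
    rintro (w | e) -
    · rw [rGraph_dist_from_vertex hc]
      exact dist_le_ecc G v w
    · rw [rGraph_dist_from_vertex hc]
      obtain ⟨x, hx, hd⟩ := exists_vertexEdgeDist (G := G) v e
      obtain ⟨y, hy, hxy⟩ := exists_other e hx
      have h1 := dist_ne_of_adj hc hbip v hxy
      have h2 := vertexEdgeDist_le (G := G) (v := v) (x := y) (e := e) (by simp [hy])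
      have h3 := dist_le_ecc G v y
      simp only [distFromVertex]
      omega
  · refine Finset.sup_le fun w _ => ?_
    have := dist_le_ecc (rGraph G) (Sum.inl v) (Sum.inl w)
    rwa [rGraph_dist_from_vertex hc] at this

lemma exists_edge_of_two_le_card (hc : G.Connected) (hcard : 2 ≤ Fintype.card V) (v : V) :
    ∃ e : G.edgeSet, v ∈ (e : Sym2 V) := by
  have : Nontrivial V := Fintype.one_lt_card_iff_nontrivial.1 hcard
  obtain ⟨w, hw⟩ := hc.preconnected.exists_adj_of_nontrivial v
  exact ⟨⟨s(v, w), hw⟩, by simp⟩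

lemma ecc_rGraph_inr (hc : G.Connected) (hcard : 2 ≤ Fintype.card V) (e : G.edgeSet)
    (hdeg : deg1 (lineG G) e ≠ 0) :
    ecc (rGraph G) (Sum.inr e) = ecc (lineG G) e + 1 := by
  obtain ⟨g, hg⟩ : ∃ g, (lineG G).Adj e g := by
    obtain ⟨g, hg⟩ := Finset.card_pos.1 (Nat.pos_of_ne_zero hdeg)
    exact ⟨g, by simpa using hg⟩
  have hpos : 1 ≤ ecc (lineG G) e := by
    rw [← dist_eq_one_iff_adj.2 hg]
    exact dist_le_ecc _ _ _
  apply le_antisymm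
  · refine Finset.sup_le ?_
    rintro (w | f) -
    · rw [rGraph_dist_from_edge hc]
      simp only [distFromEdge]
      by_cases hw : w ∈ (e : Sym2 V)
      · rw [(vertexEdgeDist_eq_zero hc).2 hw]
        omega
      -- Any edge through `w` is at least as far from `e` in `L(G)` as `w` is in `G`.
      · obtain ⟨f, hf⟩ := exists_edge_of_two_le_card hc hcard w
        have h1 := dist_le_ecc (lineG G) e f
        have hef : e ≠ f := by rintro rfl; exact hw hf
        rw [lineG_dist hc, if_neg hef] at h1
        have := vertexEdgeDist_le_edgeEdgeDist hc e hf
        omega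
    · rw [rGraph_dist_from_edge hc]
      have h1 := dist_le_ecc (lineG G) e f
      rw [lineG_dist hc] at h1
      simp only [distFromEdge]
      split_ifs at h1 ⊢ <;> omega
  · obtain ⟨f, -, hf⟩ := Finset.exists_mem_eq_sup univ ⟨e, mem_univ e⟩
      (fun u => (lineG G).dist e u)
    change ecc (lineG G) e = (lineG G).dist e f at hf
    have h1 := dist_le_ecc (rGraph G) (Sum.inr e) (Sum.inr f)
    rw [rGraph_dist_from_edge hc] at h1
    rw [lineG_dist hc] at hf
    simp only [distFromEdge] at h1
    split_ifs at h1 hf <;> omega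

/-! ### The index of `R(G)` -/

lemma sum_deg1 {W : Type*} [Fintype W] (X : SimpleGraph W) :
    ∑ v, deg1 X v = 2 * numEdges X := by
  have h := X.sum_degrees_eq_twice_card_edges
  refine Eq.trans (Finset.sum_congr rfl fun v _ => ?_) (h.trans ?_)
  · rw [deg1, ← card_neighborFinset_eq_degree]
    congr 1
    ext w
    simp
  · rw [numEdges, ← coe_edgeFinset, Set.ncard_coe_finset]
    congr!

end
end

theorem rGraph_leapECI_bipartite {V : Type*} [Fintype V] (G : SimpleGraph V)
    (hconn : G.Connected) (hcard : 2 ≤ Fintype.card V)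
    (hbip : G.Colorable 2)
    (hC3 : fFree (SimpleGraph.cycleGraph 3) G)
    (hC4 : fFree (SimpleGraph.cycleGraph 4) G) :
    leapECI (rGraph G) = 2 * leapECI G + 2 * eci (lineG G) + 4 * numEdges (lineG G) := by
  have h1 : ∀ v : V, deg2 (rGraph G) (Sum.inl v) * ecc (rGraph G) (Sum.inl v) =
      2 * (deg2 G v * ecc G v) := by
    intro v
    rw [deg2_rGraph_inl hconn hbip hC4, ecc_rGraph_inl hconn hbip, mul_assoc]
  have h2 : ∀ e : G.edgeSet, deg2 (rGraph G) (Sum.inr e) * ecc (rGraph G) (Sum.inr e) =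
      2 * (deg1 (lineG G) e * ecc (lineG G) e) + 2 * deg1 (lineG G) e := by
    intro e
    rw [deg2_rGraph_inr hconn hbip]
    by_cases hd : deg1 (lineG G) e = 0
    · simp [hd]
    · rw [ecc_rGraph_inr hconn hcard e hd]
      ring
  have h3 := sum_deg1 (lineG G)
  simp only [leapECI, eci, Fintype.sum_sum_type, h1, h2, Finset.sum_add_distrib,
    ← Finset.mul_sum, h3]
  ring
end
end

section
/- Let G and H be disjoint finite simple connected graphs, where G has n ≥ 3 vertices and H has n₁ vertices and m₁ edges, and suppose G is isomorphic to the star Sₙ = K_{1,n−1}. Then Lξᶜ(G ∨̇ H) = (3n−1)(n−1) + (3n + 2n₁ − 3)(n + n₁ − 2) − 4m₁. -/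
/-!
Write `X` for the join of the star `G` (centre `c`) with `H`. Every original vertex of `G` is
adjacent to all of `H`, and `c` is adjacent to every subdivision vertex, so all distances in `X`
are at most 3, and distance 2 means distinct, non-adjacent and with a common neighbour
(`dist_eq_two_iff_common_neighbor`). With `n` vertices in `G` and `n₁` in `H` this gives

* an original vertex has `n - 1` vertices at distance 2, namely the other original ones; its
  eccentricity is 2 for `c` and 3 for a leaf, an edge at another leaf being at distance 3;
* a subdivision vertex has at distance 2 all other subdivision vertices (through `c`) and all of
  `H`, that is `n + n₁ - 2` vertices, and its eccentricity is 3;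
* a vertex `w` of `H` has at distance 2 the `n - 1` subdivision vertices and its non-neighbours
  in `H`, that is `n + n₁ - 2 - deg w` vertices, and its eccentricity is 2.

These are the lemmas `deg2_svJoin_*` and `ecc_svJoin_*`; summing the products, with the
degree-sum formula for `H`, gives the result.
-/

/-!
Definitions for the leap eccentric connectivity index of graph operations with
subdivided edges (Song–Tang).
-/

open SimpleGraph Finset
open scoped Classical

noncomputable section

/-! ### Adjacency in the subdivision vertex join -/

section Adjacency

variable {V W : Type*} (G : SimpleGraph V) (H : SimpleGraph W)

lemma svJoin_adj_VV (u v : V) :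
    ¬ (svJoin G H).Adj (Sum.inl (Sum.inl u)) (Sum.inl (Sum.inl v)) := by
  simp [svJoin, subdivG]

lemma svJoin_adj_VE (u : V) (e : G.edgeSet) :
    (svJoin G H).Adj (Sum.inl (Sum.inl u)) (Sum.inl (Sum.inr e)) ↔ u ∈ (e : Sym2 V) := by
  simp [svJoin, subdivG]

lemma svJoin_adj_EV (u : V) (e : G.edgeSet) :
    (svJoin G H).Adj (Sum.inl (Sum.inr e)) (Sum.inl (Sum.inl u)) ↔ u ∈ (e : Sym2 V) := by
  simp [svJoin, subdivG]

lemma svJoin_adj_EE (e f : G.edgeSet) :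
    ¬ (svJoin G H).Adj (Sum.inl (Sum.inr e)) (Sum.inl (Sum.inr f)) := by
  simp [svJoin, subdivG]

lemma svJoin_adj_VW (u : V) (w : W) :
    (svJoin G H).Adj (Sum.inl (Sum.inl u)) (Sum.inr w) := by
  simp [svJoin]

lemma svJoin_adj_WV (u : V) (w : W) :
    (svJoin G H).Adj (Sum.inr w) (Sum.inl (Sum.inl u)) := by
  simp [svJoin]

lemma svJoin_adj_EW (e : G.edgeSet) (w : W) :
    ¬ (svJoin G H).Adj (Sum.inl (Sum.inr e)) (Sum.inr w) := by
  simp [svJoin]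

lemma svJoin_adj_WE (e : G.edgeSet) (w : W) :
    ¬ (svJoin G H).Adj (Sum.inr w) (Sum.inl (Sum.inr e)) := by
  simp [svJoin]

lemma svJoin_adj_WW (w w' : W) :
    (svJoin G H).Adj (Sum.inr w) (Sum.inr w') ↔ H.Adj w w' := by
  simp only [svJoin, SimpleGraph.fromRel_adj, ne_eq, Sum.inr.injEq, H.adj_comm w' w, or_self]
  exact ⟨fun h => h.2, fun h => ⟨h.ne, h⟩⟩

end Adjacency

/-! ### Small distances and eccentricities -/

section Distance

variable {α : Type*} {X : SimpleGraph α}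

lemma dist_eq_two_iff_common_neighbor (a b : α) :
    X.dist a b = 2 ↔ a ≠ b ∧ ¬ X.Adj a b ∧ ∃ c, X.Adj a c ∧ X.Adj c b := by
  constructor
  · intro h
    obtain ⟨p, hp⟩ := SimpleGraph.exists_walk_of_dist_ne_zero (G := X) (u := a) (v := b) (by omega)
    refine ⟨?_, ?_, ?_⟩
    · rintro rfl
      simp at h
    · intro hadj
      rw [← SimpleGraph.dist_eq_one_iff_adj] at hadj
      omega
    · rw [h] at hp
      match p, hp with
      | .cons h₁ (.cons h₂ .nil), _ => exact ⟨_, h₁, h₂⟩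
  · rintro ⟨hne, hadj, c, hac, hcb⟩
    have h₁ := SimpleGraph.dist_le (Walk.cons hac (Walk.cons hcb Walk.nil))
    have h₂ : 1 < X.dist a b :=
      (hac.reachable.trans hcb.reachable).one_lt_dist_of_ne_of_not_adj hne hadj
    simp only [Walk.length_cons, Walk.length_nil] at h₁
    omega

lemma dist_le_two_of_common_neighbor {a b c : α} (hac : X.Adj a c) (hcb : X.Adj c b) :
    X.dist a b ≤ 2 := by
  simpa using SimpleGraph.dist_le (Walk.cons hac (Walk.cons hcb Walk.nil))

lemma dist_le_three_of_adj {a b c d : α} (hab : X.Adj a b) (hbc : X.Adj b c) (hcd : X.Adj c d) :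
    X.dist a d ≤ 3 := by
  simpa using SimpleGraph.dist_le (Walk.cons hab (Walk.cons hbc (Walk.cons hcd Walk.nil)))

lemma dist_eq_three_of_adj {a b c d : α} (hab : X.Adj a b) (hbc : X.Adj b c) (hcd : X.Adj c d)
    (hne : a ≠ d) (hadj : ¬ X.Adj a d) (hno : ∀ x, ¬ (X.Adj a x ∧ X.Adj x d)) :
    X.dist a d = 3 := by
  have h₁ := dist_le_three_of_adj hab hbc hcd
  have h₂ : 1 < X.dist a d :=
    (hab.reachable.trans (hbc.reachable.trans hcd.reachable)).one_lt_dist_of_ne_of_not_adj hne hadj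
  have h₃ : X.dist a d ≠ 2 := by
    rw [Ne, dist_eq_two_iff_common_neighbor]
    rintro ⟨-, -, x, hx⟩
    exact hno x hx
  omega

lemma ecc_eq_of_le_of_eq [Fintype α] {a b : α} {k : ℕ} (hle : ∀ x, X.dist a x ≤ k)
    (hb : X.dist a b = k) : ecc X a = k :=
  le_antisymm (Finset.sup_le fun x _ => hle x)
    (hb ▸ Finset.le_sup (f := fun u => X.dist a u) (Finset.mem_univ b))

end Distance

/-! ### Stars -/

/-- `G` is a star with centre `c`: its edges are exactly the pairs joining `c` to another
vertex. -/
def IsStarAt {V : Type*} (G : SimpleGraph V) (c : V) : Prop :=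
  ∀ u v, G.Adj u v ↔ (u = c ∧ v ≠ c) ∨ (u ≠ c ∧ v = c)

lemma exists_isStarAt {V : Type*} {G : SimpleGraph V} {k : ℕ}
    (φ : G ≃g completeBipartiteGraph (Fin 1) (Fin k)) : ∃ c, IsStarAt G c := by
  refine ⟨φ.symm (Sum.inl 0), fun u v => ?_⟩
  have key : ∀ x, x = φ.symm (Sum.inl 0) ↔ (φ x).isLeft := by
    intro x
    constructor
    · rintro rfl
      simp
    · intro h
      obtain ⟨i, hi⟩ := Sum.isLeft_iff.1 h
      rw [Subsingleton.elim 0 i, ← hi]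
      simp
  rw [Ne, Ne, key, key, ← φ.map_adj_iff, completeBipartiteGraph_adj]
  simp

section Star

variable {V W : Type*} {G : SimpleGraph V} {c : V}

lemma IsStarAt.mem_edgeSet (hc : IsStarAt G c) {v : V} (hv : v ≠ c) : s(c, v) ∈ G.edgeSet := by
  rw [SimpleGraph.mem_edgeSet, hc]
  exact Or.inl ⟨rfl, hv⟩

lemma IsStarAt.exists_leaf (hc : IsStarAt G c) (e : G.edgeSet) :
    ∃ l, l ≠ c ∧ (e : Sym2 V) = s(c, l) := by
  obtain ⟨e, he⟩ := e
  induction e with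
  | h u v =>
    rw [SimpleGraph.mem_edgeSet, hc] at he
    rcases he with ⟨rfl, hv⟩ | ⟨hu, rfl⟩
    · exact ⟨v, hv, rfl⟩
    · exact ⟨u, hu, Sym2.eq_swap⟩

lemma IsStarAt.center_mem (hc : IsStarAt G c) (e : G.edgeSet) : c ∈ (e : Sym2 V) := by
  obtain ⟨l, -, h⟩ := hc.exists_leaf e
  simp [h]

lemma IsStarAt.card_edgeSet [Fintype V] (hc : IsStarAt G c) :
    Fintype.card G.edgeSet + 1 = Fintype.card V := by
  have h : Fintype.card {v : V // v ≠ c} = Fintype.card G.edgeSet := by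
    refine Fintype.card_of_bijective
      (f := fun v : {v : V // v ≠ c} => (⟨s(c, v.1), hc.mem_edgeSet v.2⟩ : G.edgeSet)) ⟨?_, ?_⟩
    · intro v w hvw
      have := congrArg Subtype.val hvw
      exact Subtype.ext (Sym2.congr_right.1 this)
    · intro e
      obtain ⟨l, hl, he⟩ := hc.exists_leaf e
      exact ⟨⟨l, hl⟩, Subtype.ext he.symm⟩
  rw [← h, Fintype.card_subtype_compl, Fintype.card_subtype_eq]
  have : 0 < Fintype.card V := Fintype.card_pos_iff.2 ⟨c⟩
  omega

variable {H : SimpleGraph W}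

/-! ### Second degrees and eccentricities in the join of a star -/

/-- An original vertex and a subdivision vertex that are not incident are at distance 3, via a
vertex of `H` and the centre. -/
lemma dist_svJoin_of_notMem [Nonempty W] (hc : IsStarAt G c) (v : V) (e : G.edgeSet)
    (hv : v ∉ (e : Sym2 V)) :
    (svJoin G H).dist (Sum.inl (Sum.inl v)) (Sum.inl (Sum.inr e)) = 3 := by
  obtain ⟨w⟩ := ‹Nonempty W›
  refine dist_eq_three_of_adj (svJoin_adj_VW G H v w) (svJoin_adj_WV G H c w)
    ((svJoin_adj_VE G H _ _).2 (hc.center_mem e)) (by simp) (by rwa [svJoin_adj_VE]) ?_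
  rintro ((x | x) | x) ⟨h₁, h₂⟩
  · exact svJoin_adj_VV G H _ _ h₁
  · exact svJoin_adj_EE G H _ _ h₂
  · exact svJoin_adj_WE G H _ _ h₂

lemma dist_svJoin_VE_le [Nonempty W] (hc : IsStarAt G c) (v : V) (e : G.edgeSet) :
    (svJoin G H).dist (Sum.inl (Sum.inl v)) (Sum.inl (Sum.inr e)) ≤ 3 := by
  obtain ⟨w⟩ := ‹Nonempty W›
  exact dist_le_three_of_adj (svJoin_adj_VW G H v w) (svJoin_adj_WV G H c w)
    ((svJoin_adj_VE G H _ _).2 (hc.center_mem e))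

variable [Fintype V] [Fintype W]

/-- Two original vertices have a common neighbour in `H`, while an original vertex and a
subdivision vertex never have a common neighbour, the neighbours of a subdivision vertex being
original. -/
lemma deg2_svJoin_V [Nonempty W] (v : V) :
    deg2 (svJoin G H) (Sum.inl (Sum.inl v)) + 1 = Fintype.card V := by
  have hVV : ∀ u, (svJoin G H).dist (Sum.inl (Sum.inl v)) (Sum.inl (Sum.inl u)) = 2 ↔ u ≠ v := by
    intro u
    obtain ⟨w⟩ := ‹Nonempty W›
    rw [dist_eq_two_iff_common_neighbor]
    refine ⟨fun h hu => h.1 (by rw [hu]), fun h => ⟨by simpa using h.symm, svJoin_adj_VV G H _ _,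
      Sum.inr w, svJoin_adj_VW G H _ _, svJoin_adj_WV G H _ _⟩⟩
  have hVE : ∀ e, (svJoin G H).dist (Sum.inl (Sum.inl v)) (Sum.inl (Sum.inr e)) ≠ 2 := by
    intro e
    rw [Ne, dist_eq_two_iff_common_neighbor]
    rintro ⟨-, -, (x | x) | x, h₁, h₂⟩
    · exact svJoin_adj_VV G H _ _ h₁
    · exact svJoin_adj_EE G H _ _ h₂
    · exact svJoin_adj_WE G H _ _ h₂
  have hVW : ∀ w, (svJoin G H).dist (Sum.inl (Sum.inl v)) (Sum.inr w) ≠ 2 := by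
    intro w
    rw [Ne, dist_eq_two_iff_common_neighbor]
    exact fun h => h.2.1 (svJoin_adj_VW G H _ _)
  rw [deg2, Finset.card_filter, Fintype.sum_sum_type, Fintype.sum_sum_type]
  simp only [hVV, hVE, hVW, if_false, Finset.sum_const_zero, add_zero]
  rw [← Finset.card_filter, Finset.filter_ne', Finset.card_erase_of_mem (Finset.mem_univ _),
    Finset.card_univ]
  have : 0 < Fintype.card V := Fintype.card_pos_iff.2 ⟨v⟩
  omega

/-- Two subdivision vertices, and a subdivision vertex and a vertex of `H`, have the centre as a
common neighbour. -/
lemma deg2_svJoin_E (hc : IsStarAt G c) (e : G.edgeSet) :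
    deg2 (svJoin G H) (Sum.inl (Sum.inr e)) + 1 = Fintype.card G.edgeSet + Fintype.card W := by
  have hEV : ∀ u, (svJoin G H).dist (Sum.inl (Sum.inr e)) (Sum.inl (Sum.inl u)) ≠ 2 := by
    intro u
    rw [Ne, dist_eq_two_iff_common_neighbor]
    rintro ⟨-, -, (x | x) | x, h₁, h₂⟩
    · exact svJoin_adj_VV G H _ _ h₂
    · exact svJoin_adj_EE G H _ _ h₁
    · exact svJoin_adj_EW G H _ _ h₁
  have hEE : ∀ f, (svJoin G H).dist (Sum.inl (Sum.inr e)) (Sum.inl (Sum.inr f)) = 2 ↔ f ≠ e := by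
    intro f
    rw [dist_eq_two_iff_common_neighbor]
    refine ⟨fun h hf => h.1 (by rw [hf]), fun h => ⟨?_, svJoin_adj_EE G H _ _,
      Sum.inl (Sum.inl c), (svJoin_adj_EV G H _ _).2 (hc.center_mem e),
      (svJoin_adj_VE G H _ _).2 (hc.center_mem f)⟩⟩
    exact fun h' => h (Sum.inr_injective (Sum.inl_injective h')).symm
  have hEW : ∀ w, (svJoin G H).dist (Sum.inl (Sum.inr e)) (Sum.inr w) = 2 := by
    intro w
    rw [dist_eq_two_iff_common_neighbor]
    exact ⟨by simp, svJoin_adj_EW G H _ _, Sum.inl (Sum.inl c),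
      (svJoin_adj_EV G H _ _).2 (hc.center_mem e), svJoin_adj_VW G H _ _⟩
  rw [deg2, Finset.card_filter, Fintype.sum_sum_type, Fintype.sum_sum_type]
  simp only [hEV, hEE, hEW, if_false, if_true, Finset.sum_const_zero, zero_add]
  rw [← Finset.card_filter, Finset.filter_ne', Finset.card_erase_of_mem (Finset.mem_univ _),
    Finset.card_univ, Finset.sum_const, Finset.card_univ, smul_eq_mul, mul_one]
  have : 0 < Fintype.card G.edgeSet := Fintype.card_pos_iff.2 ⟨e⟩
  omega

/-- Every vertex of `H` and every subdivision vertex have the centre as a common neighbour, as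
do two vertices of `H`. -/
lemma deg2_svJoin_W (hc : IsStarAt G c) (w : W) :
    deg2 (svJoin G H) (Sum.inr w) + H.degree w + 1 =
      Fintype.card G.edgeSet + Fintype.card W := by
  have hWV : ∀ u, (svJoin G H).dist (Sum.inr w) (Sum.inl (Sum.inl u)) ≠ 2 := by
    intro u
    rw [Ne, dist_eq_two_iff_common_neighbor]
    exact fun h => h.2.1 (svJoin_adj_WV G H _ _)
  have hWE : ∀ e, (svJoin G H).dist (Sum.inr w) (Sum.inl (Sum.inr e)) = 2 := by
    intro e
    rw [dist_eq_two_iff_common_neighbor]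
    exact ⟨by simp, svJoin_adj_WE G H _ _, Sum.inl (Sum.inl c), svJoin_adj_WV G H _ _,
      (svJoin_adj_VE G H _ _).2 (hc.center_mem e)⟩
  have hWW : ∀ w', (svJoin G H).dist (Sum.inr w) (Sum.inr w') = 2 ↔ Hᶜ.Adj w w' := by
    intro w'
    rw [dist_eq_two_iff_common_neighbor, svJoin_adj_WW, SimpleGraph.compl_adj]
    exact ⟨fun h => ⟨fun h' => h.1 (by rw [h']), h.2.1⟩, fun h => ⟨by simpa using h.1, h.2,
      Sum.inl (Sum.inl c), svJoin_adj_WV G H _ _, svJoin_adj_VW G H _ _⟩⟩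
  rw [deg2, Finset.card_filter, Fintype.sum_sum_type, Fintype.sum_sum_type]
  simp only [hWV, hWE, hWW, if_false, if_true, Finset.sum_const_zero, zero_add]
  have hcompl := H.degree_compl w
  have hlt := H.degree_lt_card_verts w
  rw [← Finset.card_filter, ← SimpleGraph.neighborFinset_eq_filter,
    SimpleGraph.card_neighborFinset_eq_degree, Finset.sum_const, Finset.card_univ, smul_eq_mul,
    mul_one, hcompl]
  omega

lemma ecc_svJoin_center [Nonempty W] (hc : IsStarAt G c) (hV : 2 ≤ Fintype.card V) :
    ecc (svJoin G H) (Sum.inl (Sum.inl c)) = 2 := by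
  obtain ⟨w⟩ := ‹Nonempty W›
  obtain ⟨v, hv⟩ := Fintype.exists_ne_of_one_lt_card hV c
  refine ecc_eq_of_le_of_eq (b := Sum.inl (Sum.inl v)) ?_ ?_
  · rintro ((u | e) | w')
    · exact dist_le_two_of_common_neighbor (svJoin_adj_VW G H c w) (svJoin_adj_WV G H u w)
    · exact (SimpleGraph.dist_eq_one_iff_adj.2
        ((svJoin_adj_VE G H _ _).2 (hc.center_mem e))).le.trans (by norm_num)
    · exact (SimpleGraph.dist_eq_one_iff_adj.2 (svJoin_adj_VW G H _ _)).le.trans (by norm_num)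
  · rw [dist_eq_two_iff_common_neighbor]
    exact ⟨by simpa using hv.symm, svJoin_adj_VV G H _ _, Sum.inr w, svJoin_adj_VW G H _ _,
      svJoin_adj_WV G H _ _⟩

lemma exists_third_vertex (hV : 3 ≤ Fintype.card V) (a b : V) : ∃ x, x ≠ a ∧ x ≠ b := by
  have h : ({a, b} : Finset V).card < Fintype.card V := lt_of_le_of_lt Finset.card_le_two hV
  obtain ⟨x, hx⟩ := Finset.exists_mem_notMem_of_card_lt_card (t := Finset.univ) h
  exact ⟨x, by simpa using hx⟩

lemma ecc_svJoin_leaf [Nonempty W] (hc : IsStarAt G c) (hV : 3 ≤ Fintype.card V) {v : V}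
    (hv : v ≠ c) : ecc (svJoin G H) (Sum.inl (Sum.inl v)) = 3 := by
  obtain ⟨l, hlc, hlv⟩ := exists_third_vertex hV c v
  refine ecc_eq_of_le_of_eq (b := Sum.inl (Sum.inr ⟨s(c, l), hc.mem_edgeSet hlc⟩)) ?_ ?_
  · rintro ((u | e) | w')
    · obtain ⟨w⟩ := ‹Nonempty W›
      exact (dist_le_two_of_common_neighbor (svJoin_adj_VW G H v w)
        (svJoin_adj_WV G H u w)).trans (by norm_num)
    · exact dist_svJoin_VE_le hc v e
    · exact (SimpleGraph.dist_eq_one_iff_adj.2 (svJoin_adj_VW G H _ _)).le.trans (by norm_num)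
  · refine dist_svJoin_of_notMem hc v _ ?_
    simp [hv, hlv.symm]

lemma ecc_svJoin_E [Nonempty W] (hc : IsStarAt G c) (hV : 3 ≤ Fintype.card V) (e : G.edgeSet) :
    ecc (svJoin G H) (Sum.inl (Sum.inr e)) = 3 := by
  obtain ⟨l, hl, he⟩ := hc.exists_leaf e
  obtain ⟨v, hvc, hvl⟩ := exists_third_vertex hV c l
  have hce := (svJoin_adj_EV G H _ _).2 (hc.center_mem e)
  refine ecc_eq_of_le_of_eq (b := Sum.inl (Sum.inl v)) ?_ ?_
  · rintro ((u | f) | w)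
    · rw [SimpleGraph.dist_comm]
      exact dist_svJoin_VE_le hc u e
    · exact (dist_le_two_of_common_neighbor hce
        ((svJoin_adj_VE G H _ _).2 (hc.center_mem f))).trans (by norm_num)
    · exact (dist_le_two_of_common_neighbor hce (svJoin_adj_VW G H c w)).trans (by norm_num)
  · rw [SimpleGraph.dist_comm]
    refine dist_svJoin_of_notMem hc v e ?_
    simp [he, hvc, hvl]

lemma ecc_svJoin_W (hc : IsStarAt G c) (hV : 2 ≤ Fintype.card V) (w : W) :
    ecc (svJoin G H) (Sum.inr w) = 2 := by
  obtain ⟨v, hv⟩ := Fintype.exists_ne_of_one_lt_card hV c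
  refine ecc_eq_of_le_of_eq (b := Sum.inl (Sum.inr ⟨s(c, v), hc.mem_edgeSet hv⟩)) ?_ ?_
  · rintro ((u | e) | w')
    · exact (SimpleGraph.dist_eq_one_iff_adj.2 (svJoin_adj_WV G H _ _)).le.trans (by norm_num)
    · exact dist_le_two_of_common_neighbor (svJoin_adj_WV G H c w)
        ((svJoin_adj_VE G H _ _).2 (hc.center_mem e))
    · exact dist_le_two_of_common_neighbor (svJoin_adj_WV G H c w) (svJoin_adj_VW G H c w')
  · rw [dist_eq_two_iff_common_neighbor]
    exact ⟨by simp, svJoin_adj_WE G H _ _, Sum.inl (Sum.inl c), svJoin_adj_WV G H _ _,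
      (svJoin_adj_VE G H _ _).2 (hc.center_mem _)⟩

end Star

/-! ### The index of the join -/

theorem svJoin_leapECI_star {V W : Type*} [Fintype V] [Fintype W]
    (G : SimpleGraph V) (H : SimpleGraph W)
    (hGconn : G.Connected) (hHconn : H.Connected)
    (n n₁ m₁ : ℕ) (hn : n = Fintype.card V) (hn₁ : n₁ = Fintype.card W)
    (hm₁ : m₁ = numEdges H) (hn3 : 3 ≤ n)
    (hstar : Nonempty (G ≃g completeBipartiteGraph (Fin 1) (Fin (n - 1)))) :
    (leapECI (svJoin G H) : ℤ) =
      (3 * (n : ℤ) - 1) * ((n : ℤ) - 1) +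
        (3 * (n : ℤ) + 2 * (n₁ : ℤ) - 3) * ((n : ℤ) + (n₁ : ℤ) - 2) - 4 * (m₁ : ℤ) := by
  obtain ⟨φ⟩ := hstar
  obtain ⟨c, hc⟩ := exists_isStarAt φ
  have : Nonempty W := hHconn.nonempty
  have hV : 3 ≤ Fintype.card V := hn ▸ hn3
  have hE : (Fintype.card G.edgeSet : ℤ) = n - 1 := by
    have := hc.card_edgeSet
    omega
  have hdeg : ∑ w, (H.degree w : ℤ) = 2 * m₁ := by
    have h := H.sum_degrees_eq_twice_card_edges
    rw [hm₁, numEdges, ← SimpleGraph.coe_edgeFinset, Set.ncard_coe_finset]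
    rw [← Nat.cast_sum, h]
    push_cast
    -- the two sides count the edges with different `Fintype` instances on `H.edgeSet`
    congr!
  have hVterm : ∀ v : V, ((deg2 (svJoin G H) (Sum.inl (Sum.inl v)) *
      ecc (svJoin G H) (Sum.inl (Sum.inl v)) : ℕ) : ℤ) =
        3 * ((n : ℤ) - 1) - if v = c then (n : ℤ) - 1 else 0 := by
    intro v
    have h : (deg2 (svJoin G H) (Sum.inl (Sum.inl v)) : ℤ) = n - 1 := by
      have := deg2_svJoin_V (G := G) (H := H) v
      omega
    push_cast
    rw [h]
    split_ifs with hv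
    · rw [hv, ecc_svJoin_center hc (by omega)]
      push_cast
      ring
    · rw [ecc_svJoin_leaf hc hV hv]
      push_cast
      ring
  have hEterm : ∀ e : G.edgeSet, ((deg2 (svJoin G H) (Sum.inl (Sum.inr e)) *
      ecc (svJoin G H) (Sum.inl (Sum.inr e)) : ℕ) : ℤ) = 3 * ((n : ℤ) + n₁ - 2) := by
    intro e
    have := deg2_svJoin_E (H := H) hc e
    rw [ecc_svJoin_E hc hV e]
    push_cast
    omega
  have hWterm : ∀ w : W, ((deg2 (svJoin G H) (Sum.inr w) *
      ecc (svJoin G H) (Sum.inr w) : ℕ) : ℤ) = 2 * ((n : ℤ) + n₁ - 2) - 2 * H.degree w := by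
    intro w
    have := deg2_svJoin_W (H := H) hc w
    rw [ecc_svJoin_W hc (by omega) w]
    push_cast
    omega
  rw [leapECI, Nat.cast_sum, Fintype.sum_sum_type, Fintype.sum_sum_type]
  simp only [hVterm, hEterm, hWterm]
  rw [Finset.sum_sub_distrib, Finset.sum_sub_distrib, ← Finset.mul_sum univ (fun w => (H.degree w : ℤ)),
    hdeg]
  simp only [Finset.sum_const, Finset.card_univ, nsmul_eq_mul, Finset.sum_ite_eq',
    Finset.mem_univ, if_true]
  rw [hE, ← hn, ← hn₁]
  ring
end
end

section
/- Let G and H be disjoint finite simple connected graphs, where G has n ≥ 3 vertices and H has n₁ vertices and m₁ edges, and suppose G is isomorphic to the star Sₙ = K_{1,n−1}. Then Lξᶜ(G ⊻ H) = (3n + 4n₁ − 2)(n−1) + 2(n + n₁ − 1)(n₁ + 1) − 4m₁. -/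
/-!
Write `G = K_{1,k}`, `k ≥ 2`, with centre `c`, leaves `lᵢ` and edges `eᵢ`, and `n₁ = |V(H)|`.
All distances in `G ⊻ H` can be written down explicitly: `c` and every vertex of `H` are adjacent to every `eᵢ`, so they have
eccentricity 2, whereas distinct `eᵢ`, `eⱼ` are at distance 2, `eᵢ` and `lⱼ` at distance 3, and
`lᵢ` and `lⱼ` at distance 4.  These numbers are recorded in `starDist`, on a model vertex type
equivalent to that of `G ⊻ H` (`starEquiv`).

That `starDist` really is the graph distance follows from a local criterion (`dist_eq_of_local`): a
function vanishing at `u`, growing by at most 1 along every edge, and decreasing by exactly 1 along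
some edge out of every vertex other than `u`, is the distance from `u`.  The index then becomes a
sum over the model (`leapECI_eq_of_equiv`), in which the centre contributes `2(k + n₁)`, each leaf
`4(1 + n₁)`, each subdivision vertex `3(k - 1)`, and a vertex `w` of `H` contributes
`2(k + n₁ - deg w)`; the handshake lemma sums the degrees.
-/

/-!
Definitions for the leap eccentric connectivity index of graph operations with
subdivided edges (Song–Tang).
-/

open SimpleGraph Finset
open scoped Classical

noncomputable section

/-- A potential `f` that vanishes at `u`, is 1-Lipschitz along edges, and can be lowered by one
step from every vertex other than `u`, equals the distance from `u`. -/
theorem dist_eq_of_local {α : Type*} (X : SimpleGraph α) (u : α) (f : α → ℕ) (h0 : f u = 0)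
    (hlip : ∀ x y, X.Adj x y → f y ≤ f x + 1)
    (hstep : ∀ v, v ≠ u → ∃ w, X.Adj w v ∧ f v = f w + 1) (v : α) : X.dist u v = f v := by
  have upper : ∀ m v, f v = m → ∃ p : X.Walk u v, p.length = m := by
    intro m
    induction m with
    | zero =>
      intro v hv
      have : v = u := by
        by_contra hne
        obtain ⟨w, -, hw⟩ := hstep v hne
        omega
      subst this
      exact ⟨.nil, rfl⟩
    | succ m ih =>
      intro v hv
      have hne : v ≠ u := by
        rintro rfl
        omega
      obtain ⟨w, hadj, hw⟩ := hstep v hne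
      obtain ⟨p, hp⟩ := ih w (by omega)
      exact ⟨p.concat hadj, by simp [hp]⟩
  have lower : ∀ {x y : α} (p : X.Walk x y), f y ≤ f x + p.length := by
    intro x y p
    induction p with
    | nil => simp
    | cons h p ih =>
      have := hlip _ _ h
      simp only [SimpleGraph.Walk.length_cons]
      omega
  obtain ⟨p, hp⟩ := upper _ v rfl
  have h1 := SimpleGraph.dist_le p
  obtain ⟨q, hq⟩ := p.reachable.exists_walk_length_eq_dist
  have h2 := lower q
  omega

/-- If a function `d` on a type equivalent to the vertex set satisfies the local criterion of
`dist_eq_of_local`, with adjacency being `d = 1`, then the index may be computed from `d`. -/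
theorem leapECI_eq_of_equiv {α β : Type*} [Fintype α] [Fintype β] (X : SimpleGraph α)
    (ψ : β ≃ α) (d : β → β → ℕ) (h0 : ∀ x, d x x = 0)
    (hadj : ∀ x y, X.Adj (ψ x) (ψ y) ↔ d x y = 1)
    (hlip : ∀ u x y, d x y = 1 → d u y ≤ d u x + 1)
    (hstep : ∀ u v, v ≠ u → ∃ w, d w v = 1 ∧ d u v = d u w + 1) :
    leapECI X = ∑ x, (∑ y, if d x y = 2 then 1 else 0) * Finset.univ.sup (d x) := by
  have hd : ∀ x y, X.dist (ψ x) (ψ y) = d x y := by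
    intro x y
    have := dist_eq_of_local X (ψ x) (fun a => d x (ψ.symm a)) (by simp [h0])
      (fun a b hab => hlip x _ _ ((hadj _ _).1 (by simpa using hab)))
      (fun v hv => by
        obtain ⟨w, h1, h2⟩ := hstep x (ψ.symm v) (by
          rintro rfl
          simp at hv)
        exact ⟨ψ w, by simpa using (hadj w (ψ.symm v)).2 h1, by simpa using h2⟩) (ψ y)
    simpa using this
  unfold leapECI
  rw [← Equiv.sum_comp ψ]
  refine Finset.sum_congr rfl fun x _ => ?_
  congr 1
  · unfold deg2
    rw [Finset.card_filter, ← Equiv.sum_comp ψ]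
    simp [hd]
  · unfold ecc
    rw [← Finset.univ_map_equiv_to_embedding ψ, Finset.sup_map]
    refine Finset.sup_congr rfl fun y _ => ?_
    simp [hd]

/-- The distances in `K_{1,L} ⊻ H`.  The four summands of the vertex type are the centre, the
leaves, the subdivision vertices (each indexed by its leaf), and the vertices of `H`. -/
def starDist {L W : Type*} (H : SimpleGraph W) :
    ((Fin 1 ⊕ L) ⊕ L) ⊕ W → ((Fin 1 ⊕ L) ⊕ L) ⊕ W → ℕ
  | .inl (.inl (.inl _)), .inl (.inl (.inl _)) => 0
  | .inl (.inl (.inl _)), .inl (.inl (.inr _)) => 2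
  | .inl (.inl (.inl _)), .inl (.inr _) => 1
  | .inl (.inl (.inl _)), .inr _ => 2
  | .inl (.inl (.inr _)), .inl (.inl (.inl _)) => 2
  | .inl (.inl (.inr i)), .inl (.inl (.inr j)) => if i = j then 0 else 4
  | .inl (.inl (.inr i)), .inl (.inr j) => if i = j then 1 else 3
  | .inl (.inl (.inr _)), .inr _ => 2
  | .inl (.inr _), .inl (.inl (.inl _)) => 1
  | .inl (.inr i), .inl (.inl (.inr j)) => if i = j then 1 else 3
  | .inl (.inr i), .inl (.inr j) => if i = j then 0 else 2
  | .inl (.inr _), .inr _ => 1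
  | .inr _, .inl (.inl (.inl _)) => 2
  | .inr _, .inl (.inl (.inr _)) => 2
  | .inr _, .inl (.inr _) => 1
  | .inr w, .inr w' => if w = w' then 0 else if H.Adj w w' then 1 else 2

theorem starDist_self {L W : Type*} (H : SimpleGraph W) (x : ((Fin 1 ⊕ L) ⊕ L) ⊕ W) :
    starDist H x x = 0 := by
  rcases x with ((x | x) | x) | x <;> simp [starDist]

theorem starDist_lip {L W : Type*} (H : SimpleGraph W) (u x y : ((Fin 1 ⊕ L) ⊕ L) ⊕ W)
    (h : starDist H x y = 1) : starDist H u y ≤ starDist H u x + 1 := by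
  rcases u with ((u | u) | u) | u <;> rcases x with ((x | x) | x) | x <;>
    rcases y with ((y | y) | y) | y <;> simp only [starDist] at h ⊢ <;> grind

/-- Nonemptiness of `L` provides the intermediate vertex between two vertices of `H` that are
not adjacent. -/
theorem starDist_step {L W : Type*} [Nonempty L] (H : SimpleGraph W)
    (u v : ((Fin 1 ⊕ L) ⊕ L) ⊕ W) (hvu : v ≠ u) :
    ∃ w, starDist H w v = 1 ∧ starDist H u v = starDist H u w + 1 := by
  obtain ⟨l⟩ := ‹Nonempty L›
  rcases u with ((u | u) | u) | u <;> rcases v with ((v | v) | v) | v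
  · exact absurd (by rw [Subsingleton.elim v u]) hvu
  · exact ⟨.inl (.inr v), by simp [starDist]⟩
  · exact ⟨.inl (.inl (.inl 0)), by simp [starDist]⟩
  · exact ⟨.inl (.inr l), by simp [starDist]⟩
  · exact ⟨.inl (.inr u), by simp [starDist]⟩
  · have : u ≠ v := by rintro rfl; exact hvu rfl
    exact ⟨.inl (.inr v), by simp [starDist, this]⟩
  · by_cases h : u = v
    · exact ⟨.inl (.inl (.inr u)), by simp [starDist, h]⟩
    · exact ⟨.inl (.inl (.inl 0)), by simp [starDist, h]⟩
  · exact ⟨.inl (.inr u), by simp [starDist]⟩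
  · exact ⟨.inl (.inr u), by simp [starDist]⟩
  · by_cases h : u = v
    · exact ⟨.inl (.inr v), by simp [starDist, h]⟩
    · exact ⟨.inl (.inr v), by simp [starDist, h]⟩
  · have : u ≠ v := by rintro rfl; exact hvu rfl
    exact ⟨.inl (.inl (.inl 0)), by simp [starDist, this]⟩
  · exact ⟨.inl (.inr u), by simp [starDist]⟩
  · exact ⟨.inl (.inr l), by simp [starDist]⟩
  · exact ⟨.inl (.inr v), by simp [starDist]⟩
  · exact ⟨.inr u, by simp [starDist]⟩
  · have : u ≠ v := by rintro rfl; exact hvu rfl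
    by_cases h : H.Adj u v
    · exact ⟨.inr u, by simp [starDist, this, h]⟩
    · exact ⟨.inl (.inr l), by simp [starDist, this, h]⟩

/-- The edges of a star correspond to its leaves. -/
def starEdgeEquiv {V L : Type*} {G : SimpleGraph V}
    (φ : G ≃g completeBipartiteGraph (Fin 1) L) : L ≃ G.edgeSet :=
  Equiv.ofBijective
    (fun i => ⟨s(φ.symm (.inl 0), φ.symm (.inr i)), by
      rw [SimpleGraph.mem_edgeSet, φ.symm.map_adj_iff]; simp⟩) <| by
    constructor
    · intro i j h
      simpa using h
    · rintro ⟨e, he⟩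
      induction e with | _ a b
      have hab := φ.map_adj_iff.2 ((SimpleGraph.mem_edgeSet G).1 he)
      obtain ⟨x, rfl⟩ := φ.symm.surjective a
      obtain ⟨y, rfl⟩ := φ.symm.surjective b
      rcases x with x | x <;> rcases y with y | y <;> simp at hab
      · exact ⟨y, by simp [Subsingleton.elim x 0]⟩
      · exact ⟨x, by simp [Subsingleton.elim y 0, Sym2.eq_swap]⟩

/-- The identification of the model vertex type of `starDist` with the vertices of `G ⊻ H`. -/
def starEquiv {V L : Type*} {G : SimpleGraph V} (W : Type*)
    (φ : G ≃g completeBipartiteGraph (Fin 1) L) :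
    ((Fin 1 ⊕ L) ⊕ L) ⊕ W ≃ (V ⊕ G.edgeSet) ⊕ W :=
  (φ.symm.toEquiv.sumCongr (starEdgeEquiv φ)).sumCongr (Equiv.refl W)

theorem seJoin_adj_starEquiv {V L W : Type*} {G : SimpleGraph V} (H : SimpleGraph W)
    (φ : G ≃g completeBipartiteGraph (Fin 1) L) (x y : ((Fin 1 ⊕ L) ⊕ L) ⊕ W) :
    (seJoin G H).Adj (starEquiv W φ x) (starEquiv W φ y) ↔ starDist H x y = 1 := by
  have hV (a : Fin 1 ⊕ L) : starEquiv W φ (.inl (.inl a)) = .inl (.inl (φ.symm a)) := rfl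
  have hE (i : L) : starEquiv W φ (.inl (.inr i)) = .inl (.inr (starEdgeEquiv φ i)) := rfl
  have hW (w : W) : starEquiv W φ (.inr w) = .inr w := rfl
  have hmem (a : Fin 1 ⊕ L) (i : L) :
      φ.symm a ∈ (starEdgeEquiv φ i : Sym2 V) ↔ a = .inl 0 ∨ a = .inr i := by
    change φ.symm a ∈ s(φ.symm (.inl 0), φ.symm (.inr i)) ↔ _
    simp
  have h0 (a : Fin 1) : a = 0 := Subsingleton.elim a 0
  rcases x with (x | x) | x <;> rcases y with (y | y) | y <;>
    simp only [hV, hE, hW, seJoin, subdivG, SimpleGraph.fromRel_adj, hmem]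
  · rcases x with x | x <;> rcases y with y | y <;> simp [starDist] <;> grind
  · rcases x with x | x <;> simp [starDist, h0]
  · rcases x with x | x <;> simp [starDist]
  · rcases y with y | y <;> simp [starDist, h0] <;> grind
  · simp [starDist]
    grind
  · simp [starDist]
  · rcases y with y | y <;> simp [starDist]
  · simp [starDist]
  · simp only [starDist]
    grind [SimpleGraph.irrefl, SimpleGraph.adj_comm]

theorem seJoin_leapECI_star {V W : Type*} [Fintype V] [Fintype W]
    (G : SimpleGraph V) (H : SimpleGraph W)
    (hGconn : G.Connected) (hHconn : H.Connected)
    (n n₁ m₁ : ℕ) (hn : n = Fintype.card V) (hn₁ : n₁ = Fintype.card W)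
    (hm₁ : m₁ = numEdges H) (hn3 : 3 ≤ n)
    (hstar : Nonempty (G ≃g completeBipartiteGraph (Fin 1) (Fin (n - 1)))) :
    (leapECI (seJoin G H) : ℤ) =
      (3 * (n : ℤ) + 4 * (n₁ : ℤ) - 2) * ((n : ℤ) - 1) +
        2 * ((n : ℤ) + (n₁ : ℤ) - 1) * ((n₁ : ℤ) + 1) - 4 * (m₁ : ℤ) := by
  obtain ⟨φ⟩ := hstar
  obtain ⟨k, rfl⟩ : ∃ k, n = k + 1 := ⟨n - 1, by omega⟩
  rw [Nat.add_sub_cancel] at φ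
  have hk : 2 ≤ k := by omega
  clear hn hn3
  have : Nontrivial (Fin k) := Fin.nontrivial_iff_two_le.2 hk
  have i0 : Fin k := ⟨0, by omega⟩
  rw [leapECI_eq_of_equiv (seJoin G H) (starEquiv W φ) (starDist H) (starDist_self H)
    (seJoin_adj_starEquiv H φ) (starDist_lip H) (starDist_step H)]
  have eC : Finset.univ.sup (starDist (L := Fin k) H (.inl (.inl (.inl 0)))) = 2 := by
    refine le_antisymm (Finset.sup_le ?_) ?_
    · rintro (((y | y) | y) | y) - <;> simp [starDist]
    · exact Finset.le_sup (f := starDist H (.inl (.inl (.inl 0))))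
        (Finset.mem_univ (.inl (.inl (.inr i0))))
  have eL (i : Fin k) : Finset.univ.sup (starDist H (.inl (.inl (.inr i)))) = 4 := by
    refine le_antisymm (Finset.sup_le ?_) ?_
    · rintro (((y | y) | y) | y) - <;> simp only [starDist] <;> grind
    · obtain ⟨j, hj⟩ := exists_ne i
      have := Finset.le_sup (f := starDist H (.inl (.inl (.inr i))))
        (Finset.mem_univ (.inl (.inl (.inr j))))
      simpa [starDist, hj.symm] using this
  have eE (i : Fin k) : Finset.univ.sup (starDist H (.inl (.inr i))) = 3 := by
    refine le_antisymm (Finset.sup_le ?_) ?_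
    · rintro (((y | y) | y) | y) - <;> simp only [starDist] <;> grind
    · obtain ⟨j, hj⟩ := exists_ne i
      have := Finset.le_sup (f := starDist H (.inl (.inr i)))
        (Finset.mem_univ (.inl (.inl (.inr j))))
      simpa [starDist, hj.symm] using this
  have eW (w : W) : Finset.univ.sup (starDist (L := Fin k) H (.inr w)) = 2 := by
    refine le_antisymm (Finset.sup_le ?_) ?_
    · rintro (((y | y) | y) | y) - <;> simp only [starDist] <;> grind
    · exact Finset.le_sup (f := starDist (L := Fin k) H (.inr w))
        (Finset.mem_univ (.inl (.inl (.inl 0))))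
  have dC : (∑ y, if starDist (L := Fin k) H (.inl (.inl (.inl 0))) y = 2 then 1 else 0)
      = k + n₁ := by
    simp [starDist, hn₁]
  have dL (i : Fin k) : (∑ y, if starDist H (.inl (.inl (.inr i))) y = 2 then 1 else 0)
      = 1 + n₁ := by
    have h (j : Fin k) : ¬ starDist H (.inl (.inl (.inr i))) (.inl (.inl (.inr j))) = 2 := by
      simp only [starDist]
      grind
    have h' (j : Fin k) : ¬ starDist H (.inl (.inl (.inr i))) (.inl (.inr j)) = 2 := by
      simp only [starDist]
      grind
    simp only [Fintype.sum_sum_type, h, h', if_false]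
    simp [starDist, hn₁]
  have dE (i : Fin k) : (∑ y, if starDist H (.inl (.inr i)) y = 2 then 1 else 0)
      = k - 1 := by
    have h (j : Fin k) : ¬ starDist H (.inl (.inr i)) (.inl (.inl (.inr j))) = 2 := by
      simp only [starDist]
      grind
    have h' (j : Fin k) : starDist H (.inl (.inr i)) (.inl (.inr j)) = 2 ↔ j ≠ i := by
      simp only [starDist]
      grind
    simp only [Fintype.sum_sum_type, h, h', if_false]
    rw [← Finset.card_filter (fun j => j ≠ i), Finset.filter_ne']
    simp [starDist]
  have dW (w : W) : (∑ y, if starDist (L := Fin k) H (.inr w) y = 2 then 1 else 0)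
      + H.degree w = k + n₁ := by
    -- Every `w'` is exactly one of: equal to `w`, adjacent to `w`, at distance 2 from `w`.
    have h (w' : W) : (if starDist (L := Fin k) H (.inr w) (.inr w') = 2 then 1 else 0)
        + (if H.Adj w w' then 1 else 0) + (if w = w' then 1 else 0) = 1 := by
      simp only [starDist]
      grind [SimpleGraph.irrefl]
    have hs := Finset.sum_congr (rfl : (Finset.univ : Finset W) = Finset.univ) fun w' _ => h w'
    rw [Finset.sum_add_distrib, Finset.sum_add_distrib] at hs
    have hdeg : (∑ w', if H.Adj w w' then 1 else 0) = H.degree w := by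
      rw [← Finset.card_filter, ← SimpleGraph.card_neighborFinset_eq_degree,
        SimpleGraph.neighborFinset_eq_filter]
    simp only [hdeg, Finset.sum_ite_eq, Finset.mem_univ, if_true, Finset.sum_const,
      Finset.card_univ, smul_eq_mul, mul_one, ← hn₁] at hs
    have hc (x : Fin 1) : starDist (L := Fin k) H (.inr w) (.inl (.inl (.inl x))) = 2 := rfl
    have hl (i : Fin k) : starDist H (.inr w) (.inl (.inl (.inr i))) = 2 := rfl
    have he (i : Fin k) : ¬ starDist H (.inr w) (.inl (.inr i)) = 2 := by simp [starDist]
    simp only [Fintype.sum_sum_type, hc, hl, he, if_true, if_false, Finset.sum_const,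
      Finset.card_univ, Fintype.card_fin, smul_eq_mul, mul_one, mul_zero]
    omega
  have hsum : ∑ w, H.degree w = 2 * m₁ := by
    rw [SimpleGraph.sum_degrees_eq_twice_card_edges, hm₁, numEdges,
      ← SimpleGraph.coe_edgeFinset, Set.ncard_coe_finset]
    congr!
  have hW : (∑ w : W, ∑ y, if starDist (L := Fin k) H (.inr w) y = 2 then 1 else 0) + 2 * m₁
      = n₁ * (k + n₁) := by
    rw [← hsum, ← Finset.sum_add_distrib, Finset.sum_congr rfl fun w _ => dW w]
    simp [hn₁]
  rw [Fintype.sum_sum_type, Fintype.sum_sum_type, Fintype.sum_sum_type]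
  simp only [Fin.sum_univ_one, eC, eL, eE, eW, dC, dL, dE, ← Finset.sum_mul]
  obtain ⟨m, rfl⟩ : ∃ m, k = m + 1 := ⟨k - 1, by omega⟩
  generalize (∑ w : W, ∑ y, if starDist (L := Fin (m + 1)) H (.inr w) y = 2 then 1 else 0) = S
    at hW ⊢
  zify at hW
  simp
  linear_combination 2 * hW
end
end
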